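/- Let 𝒜 = {A_1, A_2, …} be the collection of closed rectangles in ℝ² where A_i has dimensions (1/i) × (1/(i+1)) for i ≥ 1. Suppose that for every ε > 0 the collection 𝒜 admits a translated packing into a square of area 1 + ε. Then there exists a translated packing of 𝒜 into a square of area 1 such that the complement, within that square, of the union of the packed rectangles has Lebesgue measure zero (i.e., 𝒜 parallel-tiles a square of area 1). -/

import Mathlib

open Pointwise

noncomputable section

/-- `ξ` is a translated packing of the family `A` into the set `C`: each translated set
`ξᵢ + Aᵢ` is contained in `C`, and the translated sets have pairwise disjoint interiors. -/
def IsTransPacking {n : ℕ} {ι : Type*} (A : ι → Set (EuclideanSpace ℝ (Fin n)))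
    (ξ : ι → EuclideanSpace ℝ (Fin n)) (C : Set (EuclideanSpace ℝ (Fin n))) : Prop :=
  (∀ i, (fun x => ξ i + x) '' A i ⊆ C) ∧
  Pairwise fun i j =>
    interior ((fun x => ξ i + x) '' A i) ∩ interior ((fun x => ξ j + x) '' A j) = ∅

/-- There exists a translated packing of `A` into `C`. -/
def TransPacksInto {n : ℕ} {ι : Type*} (A : ι → Set (EuclideanSpace ℝ (Fin n)))
    (C : Set (EuclideanSpace ℝ (Fin n))) : Prop :=
  ∃ ξ, IsTransPacking A ξ C

/-- The closed axis-aligned rectangle `[0, w] × [0, h]` in `ℝ²`. -/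
def rect (w h : ℝ) : Set (EuclideanSpace ℝ (Fin 2)) :=
  {x | x 0 ∈ Set.Icc 0 w ∧ x 1 ∈ Set.Icc 0 h}

/-- The collection of rectangles of dimensions `1 × (1/2)`, `(1/2) × (1/3)`,
`(1/3) × (1/4)`, …: the `i`-th set (for `i : ℕ`) has dimensions `(1/(i+1)) × (1/(i+2))`. -/
def moserRects : ℕ → Set (EuclideanSpace ℝ (Fin 2)) :=
  fun i => rect (1 / ((i : ℝ) + 1)) (1 / ((i : ℝ) + 2))

/-! Since interiors are open, the translation vectors of the packings of a given family into a
given compact set form a compact set. Packings into the sets of a decreasing family therefore have a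
common one by Cantor's intersection theorem, and it packs into the intersection. Applied to the
squares of side `s > 1`, this packs the rectangles into the unit square; as their areas
`1 / (i + 1) - 1 / (i + 2)` telescope to `1`, nothing but a null set remains uncovered. -/

open MeasureTheory

lemma isClosed_setOf_disjoint_vadd {G : Type*} [AddGroup G] [TopologicalSpace G]
    [IsTopologicalAddGroup G] {U : Set G} (hU : IsOpen U) (V : Set G) :
    IsClosed {p : G × G | Disjoint (p.1 +ᵥ U) (p.2 +ᵥ V)} := by
  have disjoint_iff (p : G × G) : Disjoint (p.1 +ᵥ U) (p.2 +ᵥ V) ↔ -p.1 + p.2 ∉ U - V := by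
    rw [Set.mem_sub, Set.disjoint_iff_forall_ne]
    simp only [Set.mem_vadd_set, vadd_eq_add, sub_eq_add_neg]
    push Not
    refine ⟨fun h u hu v hv huv => h ⟨u, hu, rfl⟩ ⟨v, hv, rfl⟩ ?_, ?_⟩
    · rw [← add_neg_eq_iff_eq_add, add_assoc, huv, add_neg_cancel_left]
    · rintro h _ ⟨u, hu, rfl⟩ _ ⟨v, hv, rfl⟩ huv
      exact h u hu v hv (by rw [← neg_add_cancel_left p.1 u, huv]; simp [add_assoc])
  simp only [disjoint_iff]
  exact hU.sub_right.isClosed_compl.preimage (by fun_prop)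

section Packing

variable {n : ℕ} {ι κ : Type*} {A : ι → Set (EuclideanSpace ℝ (Fin n))}
  {ξ : ι → EuclideanSpace ℝ (Fin n)} {C : Set (EuclideanSpace ℝ (Fin n))}

lemma isTransPacking_iff_vadd :
    IsTransPacking A ξ C ↔ (∀ i, ξ i +ᵥ A i ⊆ C) ∧
      Pairwise fun i j => Disjoint (ξ i +ᵥ interior (A i)) (ξ j +ᵥ interior (A j)) := by
  simp only [← interior_vadd, Set.disjoint_iff_inter_eq_empty]
  rfl

lemma isClosed_setOf_isTransPacking (A : ι → Set (EuclideanSpace ℝ (Fin n))) (hC : IsClosed C) :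
    IsClosed {ξ | IsTransPacking A ξ C} := by
  simp only [isTransPacking_iff_vadd, Set.vadd_set_subset_iff, Pairwise, Set.ofPred_and,
    Set.ofPred_forall]
  refine .inter (isClosed_iInter fun i => isClosed_iInter fun x => isClosed_iInter fun _ =>
    hC.preimage (by fun_prop)) (isClosed_iInter fun i => isClosed_iInter fun j =>
    isClosed_iInter fun _ => ?_)
  exact (isClosed_setOf_disjoint_vadd isOpen_interior (interior (A j))).preimage
    (f := fun ξ : ι → EuclideanSpace ℝ (Fin n) => (ξ i, ξ j)) (by fun_prop)

lemma isCompact_setOf_isTransPacking (hA : ∀ i, (A i).Nonempty) (hC : IsCompact C) :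
    IsCompact {ξ | IsTransPacking A ξ C} := by
  choose a ha using hA
  have hbox : IsCompact (Set.univ.pi fun i => (· + a i) ⁻¹' C) :=
    isCompact_univ_pi fun i => (Homeomorph.addRight (a i)).isCompact_preimage.mpr hC
  exact hbox.of_isClosed_subset (isClosed_setOf_isTransPacking A hC.isClosed)
    fun ξ hξ i _ => hξ.1 i ⟨a i, ha i, rfl⟩

lemma IsTransPacking.mono {D : Set (EuclideanSpace ℝ (Fin n))} (h : IsTransPacking A ξ C)
    (hCD : C ⊆ D) : IsTransPacking A ξ D :=
  ⟨fun i => (h.1 i).trans hCD, h.2⟩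

lemma IsTransPacking.iInter [Nonempty κ] {C : κ → Set (EuclideanSpace ℝ (Fin n))}
    (h : ∀ k, IsTransPacking A ξ (C k)) : IsTransPacking A ξ (⋂ k, C k) :=
  ⟨fun i => Set.subset_iInter fun k => (h k).1 i, (h (Classical.arbitrary κ)).2⟩

theorem TransPacksInto.iInter [Nonempty κ] {C : κ → Set (EuclideanSpace ℝ (Fin n))}
    (hA : ∀ i, (A i).Nonempty) (hdir : Directed (· ⊇ ·) C) (hC : ∀ k, IsCompact (C k))
    (h : ∀ k, TransPacksInto A (C k)) : TransPacksInto A (⋂ k, C k) := by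
  have hdir_packings : Directed (· ⊇ ·) fun k => {ξ | IsTransPacking A ξ (C k)} := fun k l =>
    (hdir k l).imp fun _ hm => ⟨fun _ hξ => hξ.mono hm.1, fun _ hξ => hξ.mono hm.2⟩
  obtain ⟨ξ, hξ⟩ := IsCompact.nonempty_iInter_of_directed_nonempty_isCompact_isClosed
    (fun k => {ξ | IsTransPacking A ξ (C k)}) hdir_packings h
    (fun k => isCompact_setOf_isTransPacking hA (hC k))
    (fun k => isClosed_setOf_isTransPacking A (hC k).isClosed)
  exact ⟨ξ, .iInter fun k => Set.mem_iInter.mp hξ k⟩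

lemma IsTransPacking.volume_sdiff_iUnion_eq_zero [Countable ι] (hξ : IsTransPacking A ξ C)
    (hC : volume C ≠ ⊤) (hvol : volume C ≤ ∑' i, volume (interior (A i))) :
    volume (C \ ⋃ i, (fun x => ξ i + x) '' A i) = 0 := by
  obtain ⟨hsub, hdisj⟩ := isTransPacking_iff_vadd.mp hξ
  set U := ⋃ i, (ξ i +ᵥ interior (A i))
  have hopen (i : ι) : IsOpen (ξ i +ᵥ interior (A i)) := isOpen_interior.vadd _
  have hUA : U ⊆ ⋃ i, (ξ i +ᵥ A i) :=
    Set.iUnion_mono fun i => Set.vadd_set_mono interior_subset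
  have hU : volume U = ∑' i, volume (interior (A i)) := by
    rw [measure_iUnion hdisj fun i => (hopen i).measurableSet]
    simp only [measure_vadd]
  have hUC : U =ᵐ[volume] C := ae_eq_of_subset_of_measure_ge
    (hUA.trans (Set.iUnion_subset hsub)) (hvol.trans_eq hU.symm)
    (isOpen_iUnion hopen).measurableSet.nullMeasurableSet hC
  exact measure_mono_null (Set.sdiff_subset_sdiff_right hUA) (ae_le_set.mp hUC.symm.le)

end Packing

section Rect

lemma rect_eq_preimage_Icc (w h : ℝ) :
    rect w h = WithLp.ofLp ⁻¹' Set.Icc ![0, 0] ![w, h] := by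
  ext x
  simp only [rect, Set.mem_ofPred_eq, Set.mem_preimage, Set.mem_Icc, Pi.le_def, Fin.forall_fin_two,
    Matrix.cons_val_zero, Matrix.cons_val_one]
  tauto

lemma isCompact_rect (w h : ℝ) : IsCompact (rect w h) := by
  rw [rect_eq_preimage_Icc]
  exact (PiLp.homeomorph 2 fun _ : Fin 2 => ℝ).isCompact_preimage.mpr isCompact_Icc

lemma convex_rect (w h : ℝ) : Convex ℝ (rect w h) := by
  rw [rect_eq_preimage_Icc]
  exact (convex_Icc _ _).linear_preimage (WithLp.linearEquiv 2 ℝ (Fin 2 → ℝ)).toLinearMap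

lemma rect_nonempty {w h : ℝ} (hw : 0 ≤ w) (hh : 0 ≤ h) : (rect w h).Nonempty :=
  ⟨0, ⟨le_rfl, hw⟩, le_rfl, hh⟩

lemma rect_mono {w w' h h' : ℝ} (hw : w ≤ w') (hh : h ≤ h') : rect w h ⊆ rect w' h' :=
  fun _ hx => ⟨Set.Icc_subset_Icc_right hw hx.1, Set.Icc_subset_Icc_right hh hx.2⟩

lemma iInter_rect_Ioi (a : ℝ) : ⋂ s : Set.Ioi a, rect s s = rect a a := by
  refine (Set.subset_iInter fun s => rect_mono s.2.le s.2.le).antisymm' fun x hx => ?_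
  have hmem (s : ℝ) (hs : a < s) : x ∈ rect s s := Set.mem_iInter.mp hx ⟨s, hs⟩
  obtain ⟨s, hs⟩ := exists_gt a
  exact ⟨⟨(hmem s hs).1.1, le_of_forall_gt_imp_ge_of_dense fun s hs => (hmem s hs).1.2⟩,
    (hmem s hs).2.1, le_of_forall_gt_imp_ge_of_dense fun s hs => (hmem s hs).2.2⟩

lemma volume_rect {w : ℝ} (hw : 0 ≤ w) (h : ℝ) : volume (rect w h) = ENNReal.ofReal (w * h) := by
  rw [rect_eq_preimage_Icc, (PiLp.volume_preserving_ofLp (Fin 2)).measure_preimage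
    measurableSet_Icc.nullMeasurableSet, Real.volume_Icc_pi, ENNReal.ofReal_mul hw]
  simp only [Fin.prod_univ_two, Matrix.cons_val_zero, Matrix.cons_val_one, sub_zero]

lemma volume_interior_rect {w : ℝ} (hw : 0 ≤ w) (h : ℝ) :
    volume (interior (rect w h)) = ENNReal.ofReal (w * h) := by
  rw [measure_congr (interior_ae_eq_of_null_frontier ((convex_rect w h).addHaar_frontier volume)),
    volume_rect hw]

lemma transPacksInto_rect_of_forall_gt {ι : Type*} {A : ι → Set (EuclideanSpace ℝ (Fin 2))}
    {a : ℝ} (hA : ∀ i, (A i).Nonempty) (h : ∀ s > a, TransPacksInto A (rect s s)) :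
    TransPacksInto A (rect a a) := by
  have hmono : Monotone fun s : Set.Ioi a => rect s s := fun _ _ hst => rect_mono hst hst
  rw [← iInter_rect_Ioi]
  exact .iInter hA hmono.directed_ge (fun s => isCompact_rect s s) fun s => h s s.2

end Rect

lemma moserRects_nonempty (i : ℕ) : (moserRects i).Nonempty :=
  rect_nonempty (by positivity) (by positivity)

lemma hasSum_moserRects_area : HasSum (fun i : ℕ => 1 / ((i : ℝ) + 1) * (1 / ((i : ℝ) + 2))) 1 := by
  have telescope (i : ℕ) : 1 / ((i : ℝ) + 1) * (1 / ((i : ℝ) + 2)) =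
      1 / ((i : ℝ) + 1) - 1 / (((i + 1 : ℕ) : ℝ) + 1) := by
    push_cast
    field_simp
    ring
  rw [hasSum_iff_tendsto_nat_of_nonneg fun i => by positivity]
  simp only [telescope, Finset.sum_range_sub' fun i : ℕ => 1 / ((i : ℝ) + 1)]
  simpa using (tendsto_one_div_add_atTop_nhds_zero_nat (𝕜 := ℝ)).const_sub 1

lemma tsum_volume_interior_moserRects : ∑' i, volume (interior (moserRects i)) = 1 := by
  have volume_interior (i : ℕ) : volume (interior (moserRects i)) =
      ENNReal.ofReal (1 / ((i : ℝ) + 1) * (1 / ((i : ℝ) + 2))) :=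
    volume_interior_rect (by positivity) _
  simp only [volume_interior]
  rw [← ENNReal.ofReal_tsum_of_nonneg (fun i => by positivity) hasSum_moserRects_area.summable,
    hasSum_moserRects_area.tsum_eq, ENNReal.ofReal_one]

theorem moser_rectangles_parallel_tile_square_general {ι : Type*} [Countable ι]
    {A : ι → Set (EuclideanSpace ℝ (Fin 2))} (hA : ∀ i, (A i).Nonempty)
    (hvol : 1 ≤ ∑' i, volume (interior (A i)))
    (h : ∀ ε : ℝ, 0 < ε → ∃ s : ℝ, 0 ≤ s ∧ s ^ 2 = 1 + ε ∧ TransPacksInto A (rect s s)) :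
    ∃ ξ : ι → EuclideanSpace ℝ (Fin 2),
      IsTransPacking A ξ (rect 1 1) ∧
      volume (rect 1 1 \ ⋃ i, (fun x => ξ i + x) '' A i) = 0 := by
  have packs_of_one_lt (s : ℝ) (hs : s > 1) : TransPacksInto A (rect s s) := by
    obtain ⟨t, ht, hts, hpack⟩ := h (s ^ 2 - 1) (by nlinarith)
    obtain rfl : t = s := (sq_eq_sq₀ ht (by linarith)).mp (by linarith)
    exact hpack
  obtain ⟨ξ, hξ⟩ := transPacksInto_rect_of_forall_gt hA packs_of_one_lt
  have volume_square : volume (rect 1 1) = 1 := by simp [volume_rect]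
  exact ⟨ξ, hξ, hξ.volume_sdiff_iUnion_eq_zero (by simp [volume_square])
    (volume_square.trans_le hvol)⟩

/-- **Corollary 1, parallel version.** If for every `ε > 0` the rectangles of dimensions
`1 × (1/2)`, `(1/2) × (1/3)`, … admit a translated packing into a square of area `1 + ε`,
then they parallel-tile a square of area `1`: there is a translated packing into the unit
square whose complement in that square has Lebesgue measure zero. -/
theorem moser_rectangles_parallel_tile_square
    (h : ∀ ε : ℝ, 0 < ε → ∃ s : ℝ, 0 ≤ s ∧ s ^ 2 = 1 + ε ∧
      TransPacksInto moserRects (rect s s)) :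
    ∃ ξ : ℕ → EuclideanSpace ℝ (Fin 2),
      IsTransPacking moserRects ξ (rect 1 1) ∧
      MeasureTheory.volume
        (rect 1 1 \ ⋃ i, (fun x => ξ i + x) '' moserRects i) = 0 :=
  moser_rectangles_parallel_tile_square_general moserRects_nonempty
    tsum_volume_interior_moserRects.ge h
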